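/- Let f be a nonzero binary octavic over an algebraically closed field k with char k ∉ {2,3,5,7}. Then f has a root of multiplicity at least 5 if and only if J_i(f) = 0 for all i = 2,...,8. -/

import Mathlib

noncomputable section

open MvPolynomial


variable {k : Type*} [Field k]

/-- char k not in {2,3,5,7} -/
def CharOK (k : Type*) [Field k] : Prop :=
  ringChar k ≠ 2 ∧ ringChar k ≠ 3 ∧ ringChar k ≠ 5 ∧ ringChar k ≠ 7

/-- the r-th transvectant of binary forms f, g of degrees n and m -/
def transvectant (n m r : ℕ) (f g : MvPolynomial (Fin 2) k) : MvPolynomial (Fin 2) k :=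
  C ((((m - r).factorial * (n - r).factorial : ℕ) : k) /
      ((n.factorial * m.factorial : ℕ) : k)) *
    ∑ j ∈ Finset.range (r + 1),
      C ((-1 : k) ^ j * (r.choose j : k)) *
        ((fun p => pderiv (0 : Fin 2) p)^[r - j] ((fun p => pderiv (1 : Fin 2) p)^[j] f)) *
        ((fun p => pderiv (0 : Fin 2) p)^[j] ((fun p => pderiv (1 : Fin 2) p)^[r - j] g))

/-- the binary octavic with coefficient vector a -/
def octForm (a : Fin 9 → k) : MvPolynomial (Fin 2) k :=
  ∑ i : Fin 9, C (a i) * X 0 ^ (i : ℕ) * X 1 ^ (8 - (i : ℕ))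

def covg (a : Fin 9 → k) := transvectant 8 8 4 (octForm a) (octForm a)
def covk (a : Fin 9 → k) := transvectant 8 8 6 (octForm a) (octForm a)
def covh (a : Fin 9 → k) := transvectant 4 4 2 (covk a) (covk a)
def covm (a : Fin 9 → k) := transvectant 8 4 4 (octForm a) (covk a)
def covn (a : Fin 9 → k) := transvectant 8 4 4 (octForm a) (covh a)
def covp (a : Fin 9 → k) := transvectant 8 4 4 (covg a) (covk a)
def covq (a : Fin 9 → k) := transvectant 8 4 4 (covg a) (covh a)

def J2 (a : Fin 9 → k) : k :=
  (2 ^ 2 * 5 * 7 : k) * constantCoeff (transvectant 8 8 8 (octForm a) (octForm a))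
def J3 (a : Fin 9 → k) : k :=
  ((2 ^ 4 * 5 ^ 2 * 7 ^ 3 : k) / 3) * constantCoeff (transvectant 8 8 8 (octForm a) (covg a))
def J4 (a : Fin 9 → k) : k :=
  (2 ^ 9 * 3 * 7 ^ 4 : k) * constantCoeff (transvectant 4 4 4 (covk a) (covk a))
def J5 (a : Fin 9 → k) : k :=
  (2 ^ 9 * 5 * 7 ^ 5 : k) * constantCoeff (transvectant 4 4 4 (covm a) (covk a))
def J6 (a : Fin 9 → k) : k :=
  (2 ^ 14 * 3 ^ 2 * 7 ^ 6 : k) * constantCoeff (transvectant 4 4 4 (covk a) (covh a))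
def J7 (a : Fin 9 → k) : k :=
  (2 ^ 14 * 3 * 5 * 7 ^ 7 : k) * constantCoeff (transvectant 4 4 4 (covm a) (covh a))
def J8 (a : Fin 9 → k) : k :=
  (2 ^ 17 * 3 * 5 ^ 2 * 7 ^ 9 : k) * constantCoeff (transvectant 4 4 4 (covp a) (covh a))
def J9 (a : Fin 9 → k) : k :=
  (2 ^ 19 * 3 ^ 2 * 5 * 7 ^ 9 : k) * constantCoeff (transvectant 4 4 4 (covn a) (covh a))
def J10 (a : Fin 9 → k) : k :=
  (2 ^ 22 * 3 ^ 2 * 5 ^ 2 * 7 ^ 11 : k) * constantCoeff (transvectant 4 4 4 (covq a) (covh a))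

def Jinv : ℕ → (Fin 9 → k) → k
  | 2 => J2
  | 3 => J3
  | 4 => J4
  | 5 => J5
  | 6 => J6
  | 7 => J7
  | 8 => J8
  | 9 => J9
  | 10 => J10
  | _ => fun _ => 0

/-- action of a 2x2 matrix on binary forms by substitution (X,Y) ↦ (aX+bY, cX+dY) -/
def substForm (g : Matrix (Fin 2) (Fin 2) k) (p : MvPolynomial (Fin 2) k) :
    MvPolynomial (Fin 2) k :=
  aeval (fun i : Fin 2 => C (g i 0) * X 0 + C (g i 1) * X 1) p

/-- coefficients of the transformed octavic -/
def octAct (g : Matrix (Fin 2) (Fin 2) k) (a : Fin 9 → k) : Fin 9 → k := fun i =>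
  coeff (Finsupp.single (0 : Fin 2) (i : ℕ) + Finsupp.single (1 : Fin 2) (8 - (i : ℕ)))
    (substForm g (octForm a))

/-!
Transvectants are `SL₂`-covariant, so both the vanishing of `J₂, …, J₈` and the existence of a
five-fold root may be tested after any unimodular change of coordinates. If `X ^ 5` divides `f`,
then `X ^ 4` divides `κ`, `X ^ 6` divides `g`, and the quartics `h`, `m`, `p` vanish, so every
pairing that defines a `Jᵢ` has only zero terms.

Conversely, `J₄ = J₆ = 0` says that the invariants of the quartic `κ` vanish, so `κ` has a triple
root, which we move to `X = 0`. If `κ` were not a multiple of `X ^ 4`, it could be brought to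
`X ^ 3 Y`; then `J₅`, `J₇` and `J₈` kill single coefficients of `f` and `g`, which is incompatible
with `J₂ = J₃ = 0`. Hence `κ` is a multiple of `X ^ 4`. Either `κ ≠ 0` and `J₅` forces `X` to
divide `f`, or `κ = 0` and any root of `f` can be moved to `X = 0`. When `X ∣ f`, the first four
coefficients of `κ` vanish, and one or two shears `Y ↦ Y + t X` bring `f` to a form in which the
remaining equations determine its coefficients one after the other, exhibiting `X ^ 5` or `Y ^ 5`
as a divisor.
-/

open Finset
open scoped TensorProduct MatrixGroups Nat

universe u

variable {R : Type u} [CommRing R]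

/-! ### Linear substitutions -/

/-- The substitution `substForm g` as an algebra homomorphism. -/
def linSubst (g : Matrix (Fin 2) (Fin 2) R) :
    MvPolynomial (Fin 2) R →ₐ[R] MvPolynomial (Fin 2) R :=
  aeval fun i => C (g i 0) * X 0 + C (g i 1) * X 1

@[simp]
lemma linSubst_X (g : Matrix (Fin 2) (Fin 2) R) (i : Fin 2) :
    linSubst g (X i) = C (g i 0) * X 0 + C (g i 1) * X 1 :=
  aeval_X _ i

@[simp]
lemma linSubst_C (g : Matrix (Fin 2) (Fin 2) R) (a : R) : linSubst g (C a) = C a :=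
  aeval_C _ a

lemma linSubst_linSubst (g h : Matrix (Fin 2) (Fin 2) R) (F : MvPolynomial (Fin 2) R) :
    linSubst h (linSubst g F) = linSubst (g * h) F := by
  suffices (linSubst h).comp (linSubst g) = linSubst (g * h) from DFunLike.congr_fun this F
  refine MvPolynomial.algHom_ext fun i => ?_
  simp only [AlgHom.comp_apply, linSubst_X, map_add, map_mul, linSubst_C, Matrix.mul_apply,
    Fin.sum_univ_two]
  ring

lemma linSubst_one (F : MvPolynomial (Fin 2) R) : linSubst 1 F = F := by
  suffices linSubst (1 : Matrix (Fin 2) (Fin 2) R) = AlgHom.id R _ from DFunLike.congr_fun this F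
  refine MvPolynomial.algHom_ext fun i => ?_
  fin_cases i <;> simp

lemma linSubst_linSubst_inv (g : SL(2, R)) (F : MvPolynomial (Fin 2) R) :
    linSubst (g⁻¹ : SL(2, R)) (linSubst g F) = F := by
  rw [linSubst_linSubst, ← Matrix.SpecialLinearGroup.coe_mul, mul_inv_cancel,
    Matrix.SpecialLinearGroup.coe_one, linSubst_one]

lemma constantCoeff_linSubst (g : Matrix (Fin 2) (Fin 2) R) (F : MvPolynomial (Fin 2) R) :
    constantCoeff (linSubst g F) = constantCoeff F := by
  suffices constantCoeff.comp (linSubst g).toRingHom = constantCoeff from DFunLike.congr_fun this F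
  refine MvPolynomial.ringHom_ext (fun a => ?_) fun i => ?_ <;> simp

lemma isHomogeneous_linSubst {n : ℕ} {F : MvPolynomial (Fin 2) R} (hF : F.IsHomogeneous n)
    (g : Matrix (Fin 2) (Fin 2) R) : (linSubst g F).IsHomogeneous n := by
  rw [← one_mul n]
  exact hF.aeval _ fun i => (isHomogeneous_C_mul_X _ _).add (isHomogeneous_C_mul_X _ _)

/-! ### Invariance of transvectants -/

lemma pderiv_linSubst (g : Matrix (Fin 2) (Fin 2) R) (j : Fin 2) (F : MvPolynomial (Fin 2) R) :
    pderiv j (linSubst g F) = linSubst g (g 0 j • pderiv 0 F + g 1 j • pderiv 1 F) := by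
  induction F using MvPolynomial.induction_on with
  | C a => simp
  | add p q hp hq => simp only [map_add, hp, hq, smul_add]; abel
  | mul_X p i hp =>
    simp only [map_mul, pderiv_mul, hp, linSubst_X, map_add, smul_eq_C_mul]
    fin_cases i <;> fin_cases j <;> simp [pderiv_X] <;> ring

lemma pderiv_pderiv_comm (i j : Fin 2) (F : MvPolynomial (Fin 2) R) :
    pderiv i (pderiv j F) = pderiv j (pderiv i F) := by
  let D (l : Fin 2) : Derivation R (MvPolynomial (Fin 2) R) (MvPolynomial (Fin 2) R) := pderiv l
  have hD : ⁅D i, D j⁆ = 0 := derivation_ext fun l => by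
    rw [Derivation.commutator_apply]
    simp [D, pderiv_X, Pi.single_apply, apply_ite]
  simpa only [Derivation.commutator_apply, Derivation.zero_apply, sub_eq_zero] using
    DFunLike.congr_fun hD F

/-- Cayley's operator `Ω = ∂X ⊗ ∂Y - ∂Y ⊗ ∂X`, acting on pairs of forms. -/
def cayleyOmega (R : Type*) [CommRing R] :
    Module.End R (MvPolynomial (Fin 2) R ⊗[R] MvPolynomial (Fin 2) R) :=
  TensorProduct.map (pderiv 0).toLinearMap (pderiv 1).toLinearMap -
    TensorProduct.map (pderiv 1).toLinearMap (pderiv 0).toLinearMap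

lemma cayleyOmega_pow_tmul (r : ℕ) (F G : MvPolynomial (Fin 2) R) :
    (cayleyOmega R ^ r) (F ⊗ₜ G) = ∑ j ∈ range (r + 1), ((-1 : R) ^ j * (r.choose j : R)) •
      ((pderiv 0)^[r - j] ((pderiv 1)^[j] F) ⊗ₜ[R] (pderiv 0)^[j] ((pderiv 1)^[r - j] G)) := by
  let D (i : Fin 2) : Module.End R (MvPolynomial (Fin 2) R) := (pderiv i).toLinearMap
  have D_pow (i : Fin 2) (n : ℕ) (F : MvPolynomial (Fin 2) R) :
      (D i ^ n) F = (pderiv i)^[n] F := Module.End.pow_apply ..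
  have hD : Commute (D 0) (D 1) := LinearMap.ext fun F => pderiv_pderiv_comm 0 1 F
  have hcomm : Commute ((-1 : R) • TensorProduct.map (D 1) (D 0))
      (TensorProduct.map (D 0) (D 1)) := by
    refine Commute.smul_left ?_ _
    rw [commute_iff_eq, ← TensorProduct.map_mul, ← TensorProduct.map_mul, hD.eq]
  have hΩ : cayleyOmega R =
      (-1 : R) • TensorProduct.map (D 1) (D 0) + TensorProduct.map (D 0) (D 1) :=
    LinearMap.ext fun x => (sub_eq_neg_add _ _).trans (congrArg (· + _) (neg_one_smul R _).symm)
  rw [hΩ, hcomm.add_pow, LinearMap.sum_apply]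
  refine sum_congr rfl fun j _ => ?_
  rw [← nsmul_eq_mul', smul_pow, TensorProduct.map_pow, TensorProduct.map_pow,
    ← Nat.cast_smul_eq_nsmul R, smul_mul_assoc, smul_smul, mul_comm, ← TensorProduct.map_mul,
    (hD.pow_pow (r - j) j).symm.eq, LinearMap.smul_apply, TensorProduct.map_tmul]
  simp only [Module.End.mul_apply, D_pow]

lemma transvectant_eq_cayleyOmega_pow (n m r : ℕ) (F G : MvPolynomial (Fin 2) k) :
    transvectant n m r F G =
      C ((((m - r)! * (n - r)! : ℕ) : k) / ((n ! * m ! : ℕ) : k)) *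
        LinearMap.mul' k _ ((cayleyOmega k ^ r) (F ⊗ₜ G)) := by
  simp only [transvectant, cayleyOmega_pow_tmul, map_sum, map_smul, LinearMap.mul'_apply,
    smul_eq_C_mul, mul_assoc]

/-- The substitution `linSubst g` acting on both factors of a tensor product of forms. -/
def linSubstTensor (g : Matrix (Fin 2) (Fin 2) R) :
    Module.End R (MvPolynomial (Fin 2) R ⊗[R] MvPolynomial (Fin 2) R) :=
  TensorProduct.map (linSubst g).toLinearMap (linSubst g).toLinearMap

lemma cayleyOmega_mul_linSubstTensor (g : Matrix (Fin 2) (Fin 2) R) :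
    cayleyOmega R * linSubstTensor g = g.det • (linSubstTensor g * cayleyOmega R) := by
  refine TensorProduct.ext' fun F G => ?_
  simp only [cayleyOmega, linSubstTensor, Module.End.mul_apply, LinearMap.smul_apply,
    LinearMap.sub_apply, TensorProduct.map_tmul, Derivation.coeFn_coe, AlgHom.toLinearMap_apply,
    pderiv_linSubst, map_add, map_smul, map_sub, TensorProduct.tmul_add, TensorProduct.add_tmul,
    TensorProduct.tmul_smul, ← TensorProduct.smul_tmul', smul_sub, Matrix.det_fin_two]
  module

lemma mul'_linSubstTensor (g : Matrix (Fin 2) (Fin 2) R)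
    (x : MvPolynomial (Fin 2) R ⊗[R] MvPolynomial (Fin 2) R) :
    LinearMap.mul' R _ (linSubstTensor g x) = linSubst g (LinearMap.mul' R _ x) := by
  suffices LinearMap.mul' R _ ∘ₗ linSubstTensor g =
      (linSubst g).toLinearMap ∘ₗ LinearMap.mul' R _ from LinearMap.congr_fun this x
  exact TensorProduct.ext' fun F G => (map_mul (linSubst g) F G).symm

lemma transvectant_linSubst (g : Matrix (Fin 2) (Fin 2) k) (n m r : ℕ)
    (F G : MvPolynomial (Fin 2) k) :
    transvectant n m r (linSubst g F) (linSubst g G) =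
      C (g.det ^ r) * linSubst g (transvectant n m r F G) := by
  have hpow : cayleyOmega k ^ r * linSubstTensor g =
      g.det ^ r • (linSubstTensor g * cayleyOmega k ^ r) := by
    induction r with
    | zero => simp
    | succ r ih =>
      rw [pow_succ, mul_assoc, cayleyOmega_mul_linSubstTensor, mul_smul_comm, ← mul_assoc, ih,
        smul_mul_assoc, smul_smul, mul_assoc, pow_succ']
  have hFG : linSubst g F ⊗ₜ linSubst g G = linSubstTensor g (F ⊗ₜ G) := rfl
  rw [transvectant_eq_cayleyOmega_pow, transvectant_eq_cayleyOmega_pow, hFG,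
    ← Module.End.mul_apply, hpow, LinearMap.smul_apply, Module.End.mul_apply, map_smul,
    mul'_linSubstTensor, smul_eq_C_mul, map_mul, linSubst_C]
  ring

lemma transvectant_specialLinear (g : SL(2, k)) (n m r : ℕ) (F G : MvPolynomial (Fin 2) k) :
    transvectant n m r (linSubst g F) (linSubst g G) = linSubst g (transvectant n m r F G) := by
  rw [transvectant_linSubst, g.det_coe, one_pow, C_1, one_mul]

/-! ### Binary forms in binomial coordinates -/

section Factorial

variable {n : ℕ}

lemma factorial_cast_ne_zero_of_le {m : ℕ} (hn : (n ! : R) ≠ 0) (hmn : m ≤ n) : (m ! : R) ≠ 0 :=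
  ne_zero_of_dvd_ne_zero hn (Nat.cast_dvd_cast (Nat.factorial_dvd_factorial hmn))

lemma ofNat_ne_zero_of_dvd_factorial {m : ℕ} [m.AtLeastTwo] (hn : (n ! : R) ≠ 0)
    (hm : OfNat.ofNat m ∣ n !) : (OfNat.ofNat m : R) ≠ 0 := by
  rw [← Nat.cast_ofNat]
  exact ne_zero_of_dvd_ne_zero hn (Nat.cast_dvd_cast hm)

lemma choose_cast_ne_zero {i : ℕ} (hn : (n ! : R) ≠ 0) (hin : i ≤ n) : (n.choose i : R) ≠ 0 := by
  rw [← Nat.choose_mul_factorial_mul_factorial hin] at hn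
  push_cast at hn
  exact left_ne_zero_of_mul (left_ne_zero_of_mul hn)

end Factorial

/-- The polynomial `∑ i ≤ n, (n choose i) c i T ^ i`. -/
def binomialPoly (n : ℕ) (c : ℕ → R) : Polynomial R :=
  ∑ i ∈ range (n + 1), Polynomial.monomial i (n.choose i * c i)

/-- The binary form `∑ i ≤ n, (n choose i) c i X ^ i Y ^ (n - i)` of degree `n`. With the binomial
factors split off, derivatives act on the coefficient sequence by shifts; entries of `c` beyond
index `n` are ignored. -/
def binaryForm (n : ℕ) (c : ℕ → R) : MvPolynomial (Fin 2) R :=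
  (binomialPoly n c).homogenize n

lemma coeff_binomialPoly (n i : ℕ) (c : ℕ → R) :
    (binomialPoly n c).coeff i = n.choose i * c i := by
  simp only [binomialPoly, Polynomial.finsetSum_coeff, Polynomial.coeff_monomial, sum_ite_eq',
    mem_range, ite_eq_left_iff, not_lt]
  intro hi
  rw [Nat.choose_eq_zero_of_lt hi, Nat.cast_zero, zero_mul]

lemma natDegree_binomialPoly_le (n : ℕ) (c : ℕ → R) : (binomialPoly n c).natDegree ≤ n :=
  Polynomial.natDegree_le_iff_coeff_eq_zero.2 fun i hi => by
    rw [coeff_binomialPoly, Nat.choose_eq_zero_of_lt hi, Nat.cast_zero, zero_mul]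

lemma coeff_binaryForm (n : ℕ) (c : ℕ → R) (e : Fin 2 →₀ ℕ) :
    (binaryForm n c).coeff e = if e 0 + e 1 = n then n.choose (e 0) * c (e 0) else 0 := by
  rw [binaryForm, Polynomial.coeff_homogenize, coeff_binomialPoly]

lemma isHomogeneous_binaryForm (n : ℕ) (c : ℕ → R) : (binaryForm n c).IsHomogeneous n :=
  Polynomial.isHomogeneous_homogenize _

lemma binaryForm_congr {n : ℕ} {c d : ℕ → R} (h : ∀ i ≤ n, c i = d i) :
    binaryForm n c = binaryForm n d := by
  ext e
  rw [coeff_binaryForm, coeff_binaryForm]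
  split_ifs with he
  · rw [h _ (by lia)]
  · rfl

lemma eq_of_binaryForm_eq {n i : ℕ} {c d : ℕ → k} (hn : (n ! : k) ≠ 0)
    (h : binaryForm n c = binaryForm n d) (hi : i ≤ n) : c i = d i := by
  have hpoly : binomialPoly n c = binomialPoly n d := by
    rw [← Polynomial.aeval_homogenize_X_one _ (natDegree_binomialPoly_le n c),
      ← Polynomial.aeval_homogenize_X_one _ (natDegree_binomialPoly_le n d)]
    exact congrArg _ h
  have hcoeff := congrArg (Polynomial.coeff · i) hpoly
  simp only [coeff_binomialPoly] at hcoeff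
  exact mul_left_cancel₀ (choose_cast_ne_zero hn hi) hcoeff

lemma exists_eq_binaryForm {n : ℕ} (hn : (n ! : k) ≠ 0) {F : MvPolynomial (Fin 2) k}
    (hF : F.IsHomogeneous n) : ∃ c, F = binaryForm n c := by
  let p : Polynomial k := aeval ![Polynomial.X, 1] F
  refine ⟨fun i => p.coeff i / n.choose i, ?_⟩
  ext e
  rw [← Polynomial.homogenize_eq_of_isHomogeneous hF rfl, Polynomial.coeff_homogenize,
    coeff_binaryForm]
  split_ifs with he
  · rw [mul_div_cancel₀ _ (choose_cast_ne_zero hn (by lia))]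
  · rfl

lemma binaryForm_zero (c : ℕ → R) : binaryForm 0 c = C (c 0) := by
  simp [binaryForm, binomialPoly]

lemma pderiv_zero_binaryForm (n : ℕ) (c : ℕ → R) :
    pderiv 0 (binaryForm (n + 1) c) = C ((n + 1 : ℕ) : R) * binaryForm n fun i => c (i + 1) := by
  ext e
  rw [coeff_pderiv, coeff_C_mul, coeff_binaryForm, coeff_binaryForm]
  simp only [Finsupp.add_apply, Finsupp.single_eq_same, ne_eq, one_ne_zero,
    not_false_eq_true, Finsupp.single_eq_of_ne]
  by_cases he : e 0 + e 1 = n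
  · have h := congrArg (Nat.cast (R := R)) (Nat.add_one_mul_choose_eq n (e 0))
    push_cast at h
    rw [if_pos (by lia), if_pos he]
    push_cast
    linear_combination -c (e 0 + 1) * h
  · rw [if_neg (by lia), if_neg he]
    ring

lemma pderiv_one_binaryForm (n : ℕ) (c : ℕ → R) :
    pderiv 1 (binaryForm (n + 1) c) = C ((n + 1 : ℕ) : R) * binaryForm n c := by
  ext e
  rw [coeff_pderiv, coeff_C_mul, coeff_binaryForm, coeff_binaryForm]
  simp only [Finsupp.add_apply, Finsupp.single_eq_same, ne_eq, zero_ne_one,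
    not_false_eq_true, Finsupp.single_eq_of_ne, add_zero]
  by_cases he : e 0 + e 1 = n
  · have h := congrArg (Nat.cast (R := R)) (Nat.choose_mul_succ_eq n (e 0))
    rw [show n + 1 - e 0 = e 1 + 1 by lia] at h
    push_cast at h
    rw [if_pos (by lia), if_pos he]
    push_cast
    linear_combination -c (e 0) * h
  · rw [if_neg (by lia), if_neg he]
    ring

lemma iterate_pderiv_C_mul (i : Fin 2) (m : ℕ) (a : R) (F : MvPolynomial (Fin 2) R) :
    (pderiv i)^[m] (C a * F) = C a * (pderiv i)^[m] F :=
  Function.Commute.iterate_left (g := (C a * ·)) (fun _ => pderiv_C_mul) m F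

lemma iterate_pderiv_zero_binaryForm (n a : ℕ) (c : ℕ → R) :
    (pderiv 0)^[a] (binaryForm (n + a) c) =
      C ((n + a).descFactorial a : R) * binaryForm n fun i => c (i + a) := by
  induction a generalizing c with
  | zero => simp
  | succ a ih =>
    rw [Function.iterate_succ_apply, ← add_assoc, pderiv_zero_binaryForm,
      iterate_pderiv_C_mul, ih, ← mul_assoc, ← C_mul, Nat.succ_descFactorial_succ, Nat.cast_mul]
    simp only [add_assoc]

lemma iterate_pderiv_one_binaryForm (n b : ℕ) (c : ℕ → R) :
    (pderiv 1)^[b] (binaryForm (n + b) c) =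
      C ((n + b).descFactorial b : R) * binaryForm n c := by
  induction b with
  | zero => simp
  | succ b ih =>
    rw [Function.iterate_succ_apply, ← add_assoc, pderiv_one_binaryForm,
      iterate_pderiv_C_mul, ih, ← mul_assoc, ← C_mul, Nat.succ_descFactorial_succ, Nat.cast_mul]

lemma iterate_pderiv_pderiv_binaryForm (n a b : ℕ) (c : ℕ → R) :
    (pderiv 0)^[a] ((pderiv 1)^[b] (binaryForm (n + (a + b)) c)) =
      C ((n + (a + b)).descFactorial (a + b) : R) * binaryForm n fun i => c (i + a) := by
  have hdesc := Nat.descFactorial_mul_descFactorial (n := n + (a + b)) (Nat.le_add_left b a)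
  rw [← add_assoc, Nat.add_sub_cancel_right, Nat.add_sub_cancel_right] at hdesc
  rw [← add_assoc, iterate_pderiv_one_binaryForm, iterate_pderiv_C_mul,
    iterate_pderiv_zero_binaryForm, ← mul_assoc, ← C_mul, ← Nat.cast_mul, mul_comm, mul_comm,
    mul_comm (Nat.descFactorial _ b), hdesc]

/-! ### Transvectants in binomial coordinates -/

lemma transvectant_binaryForm_eq_sum {n m r : ℕ} (hn : ((n + r)! : k) ≠ 0)
    (hm : ((m + r)! : k) ≠ 0) (c d : ℕ → k) :
    transvectant (n + r) (m + r) r (binaryForm (n + r) c) (binaryForm (m + r) d) =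
      ∑ j ∈ range (r + 1), C ((-1 : k) ^ j * r.choose j) *
        ((binaryForm n fun i => c (i + (r - j))) * binaryForm m fun i => d (i + j)) := by
  have hscalar : ((((m + r - r)! * (n + r - r)! : ℕ) : k) / (((n + r)! * (m + r)! : ℕ) : k)) *
      ((n + r).descFactorial r * (m + r).descFactorial r) = 1 := by
    rw [← Nat.factorial_mul_descFactorial (Nat.le_add_left r n)] at hn ⊢
    rw [← Nat.factorial_mul_descFactorial (Nat.le_add_left r m)] at hm ⊢
    push_cast at hn hm ⊢
    rw [mul_comm, ← mul_div_assoc, div_eq_one_iff_eq (mul_ne_zero hn hm)]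
    ring
  rw [transvectant, mul_sum]
  refine sum_congr rfl fun j hj => ?_
  have hjr : j ≤ r := by simpa [Nat.lt_succ_iff] using hj
  have hF := iterate_pderiv_pderiv_binaryForm n (r - j) j c
  have hG := iterate_pderiv_pderiv_binaryForm m j (r - j) d
  rw [Nat.sub_add_cancel hjr] at hF
  rw [Nat.add_sub_cancel' hjr] at hG
  rw [hF, hG]
  have hscalarC := congrArg (C : k → MvPolynomial (Fin 2) k) hscalar
  simp only [C_mul, C_1] at hscalarC ⊢
  linear_combination (C ((-1) ^ j) * C (r.choose j : k) *
    ((binaryForm n fun i => c (i + (r - j))) * binaryForm m fun i => d (i + j))) * hscalarC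

/-- The pairing `(c, d) ↦ ∑ j ≤ r, (-1) ^ j (r choose j) c (r - j) d j` of coefficient sequences,
which is the full transvectant of two binary forms of degree `r`. -/
def apolarPairing (r : ℕ) (c d : ℕ → R) : R :=
  ∑ j ∈ range (r + 1), (-1) ^ j * r.choose j * c (r - j) * d j

/-- The coefficient sequence, in the normalization of `binaryForm`, of the `r`-th transvectant of
binary forms of degrees `n + r` and `m + r` with coefficient sequences `c` and `d`. -/
def transvectantCoeff (n m r : ℕ) (c d : ℕ → k) (i : ℕ) : k :=
  (∑ p ∈ antidiagonal i, n.choose p.1 * m.choose p.2 *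
    apolarPairing r (fun j => c (p.1 + j)) fun j => d (p.2 + j)) / (n + m).choose i

lemma coeff_binaryForm_mul (n m : ℕ) (c d : ℕ → R) (e : Fin 2 →₀ ℕ) :
    (binaryForm n c * binaryForm m d).coeff e = if e 0 + e 1 = n + m then
      ∑ p ∈ antidiagonal (e 0), (n.choose p.1 * c p.1) * (m.choose p.2 * d p.2) else 0 := by
  rw [binaryForm, binaryForm, ← Polynomial.homogenize_mul _ _ (natDegree_binomialPoly_le n c)
    (natDegree_binomialPoly_le m d), Polynomial.coeff_homogenize, Polynomial.coeff_mul]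
  simp only [coeff_binomialPoly]

lemma transvectant_binaryForm {n m r : ℕ} (hn : ((n + r)! : k) ≠ 0) (hm : ((m + r)! : k) ≠ 0)
    (hnm : ((n + m)! : k) ≠ 0) (c d : ℕ → k) :
    transvectant (n + r) (m + r) r (binaryForm (n + r) c) (binaryForm (m + r) d) =
      binaryForm (n + m) (transvectantCoeff n m r c d) := by
  ext e
  rw [transvectant_binaryForm_eq_sum hn hm, coeff_sum, coeff_binaryForm]
  simp only [coeff_C_mul, coeff_binaryForm_mul]
  split_ifs with he
  · rw [transvectantCoeff, mul_div_cancel₀ _ (choose_cast_ne_zero hnm (by lia))]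
    simp only [apolarPairing, mul_sum]
    rw [sum_comm]
    refine sum_congr rfl fun p _ => sum_congr rfl fun j _ => ?_
    ring
  · simp

lemma transvectantCoeff_zero {n i : ℕ} (hn : (n ! : k) ≠ 0) (hi : i ≤ n) (r : ℕ) (c d : ℕ → k) :
    transvectantCoeff n 0 r c d i = apolarPairing r (fun j => c (i + j)) d := by
  rw [transvectantCoeff, add_zero, div_eq_iff (choose_cast_ne_zero hn hi),
    sum_eq_single_of_mem (i, 0) (by simp)]
  · simp [mul_comm]
  · intro p hp hp'
    obtain ⟨q, hq⟩ : ∃ q, p.2 = q + 1 := Nat.exists_eq_succ_of_ne_zero fun h0 =>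
      hp' (Prod.ext (by simpa [h0] using hp) h0)
    simp [hq]

lemma constantCoeff_transvectant_binaryForm {n : ℕ} (hn : (n ! : k) ≠ 0) (c d : ℕ → k) :
    constantCoeff (transvectant n n n (binaryForm n c) (binaryForm n d)) =
      apolarPairing n c d := by
  have h0 : ((0)! : k) ≠ 0 := by simp
  have h := transvectant_binaryForm (n := 0) (m := 0) (r := n) (by simpa using hn)
    (by simpa using hn) h0 c d
  rw [zero_add, add_zero] at h
  rw [h, binaryForm_zero, constantCoeff_C, transvectantCoeff_zero h0 le_rfl]
  simp only [zero_add]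

/-! ### Shears -/

lemma binaryForm_eq_sum (n : ℕ) (c : ℕ → R) :
    binaryForm n c = ∑ i ∈ range (n + 1), C (n.choose i * c i) * X 0 ^ i * X 1 ^ (n - i) := by
  rw [binaryForm, binomialPoly, Polynomial.homogenize_finsetSum]
  refine sum_congr rfl fun i hi => ?_
  rw [← Polynomial.C_mul_X_pow_eq_monomial, Polynomial.homogenize_C_mul,
    Polynomial.homogenize_X_pow (Nat.lt_succ_iff.1 (mem_range.1 hi)), mul_assoc]

lemma binaryForm_eq_zero {n : ℕ} {c : ℕ → R} (hc : ∀ i ≤ n, c i = 0) : binaryForm n c = 0 := by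
  rw [binaryForm_eq_sum, sum_eq_zero fun i hi => ?_]
  rw [hc i (Nat.lt_succ_iff.1 (mem_range.1 hi)), mul_zero, C_0, zero_mul, zero_mul]

/-- The matrix of the substitution `X ↦ X`, `Y ↦ Y + t X`. -/
def shearMatrix (t : R) : SL(2, R) := ⟨!![1, 0; t, 1], by simp⟩

/-- The action of `shearMatrix t` on the coefficient sequence of a binary form. -/
def shear (t : R) (c : ℕ → R) (i : ℕ) : R :=
  ∑ j ∈ range (i + 1), i.choose j * t ^ (i - j) * c j

lemma sum_binomial_shear (t : R) (n : ℕ) (c : ℕ → R) :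
    ∑ i ∈ range (n + 1), Polynomial.C (n.choose i * c i) * Polynomial.X ^ i *
      (1 + Polynomial.C t * Polynomial.X) ^ (n - i) = binomialPoly n (shear t c) := by
  ext l
  have hterm (i : ℕ) : (Polynomial.C (n.choose i * c i) * Polynomial.X ^ i *
      (1 + Polynomial.C t * Polynomial.X) ^ (n - i)).coeff l =
        n.choose l * (l.choose i * t ^ (l - i) * c i) := by
    have hpow : (1 + Polynomial.C t * Polynomial.X) ^ (n - i) =
        ((1 + Polynomial.X) ^ (n - i)).comp (Polynomial.C t * Polynomial.X) := by simp
    rw [mul_right_comm, Polynomial.coeff_mul_X_pow', Polynomial.coeff_C_mul, hpow,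
      Polynomial.comp_C_mul_X_coeff, Polynomial.coeff_one_add_X_pow]
    split_ifs with hil
    · have h := congrArg (Nat.cast (R := R)) (Nat.choose_mul (n := n) hil)
      push_cast at h
      linear_combination -(c i * t ^ (l - i)) * h
    · rw [Nat.choose_eq_zero_of_lt (not_le.1 hil)]
      simp
  rw [Polynomial.finsetSum_coeff, sum_congr rfl fun i _ => hterm i, ← mul_sum,
    coeff_binomialPoly]
  obtain hnl | hln := lt_or_ge n l
  · simp [Nat.choose_eq_zero_of_lt hnl]
  · rw [shear, ← sum_subset (range_subset_range.2 (Nat.succ_le_succ hln)) fun i _ hi => ?_]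
    rw [Nat.choose_eq_zero_of_lt (by simpa using hi)]
    simp

lemma linSubst_shearMatrix (t : R) (n : ℕ) (c : ℕ → R) :
    linSubst (shearMatrix t) (binaryForm n c) = binaryForm n (shear t c) := by
  refine (Polynomial.homogenize_eq_of_isHomogeneous
    (isHomogeneous_linSubst (isHomogeneous_binaryForm n c) _) ?_).symm
  rw [← sum_binomial_shear, binaryForm_eq_sum, map_sum, map_sum]
  refine sum_congr rfl fun i _ => ?_
  simp only [map_mul, map_pow, linSubst_X, linSubst_C, shearMatrix, map_add]
  simp [algHom_C, add_comm]

lemma shear_of_forall_lt_eq_zero {m : ℕ} {c : ℕ → R} (hc : ∀ i < m, c i = 0) (t : R) :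
    shear t c m = c m := by
  rw [shear, sum_range_succ, sum_eq_zero fun j hj => by rw [hc j (mem_range.1 hj), mul_zero]]
  simp

lemma shear_succ_of_forall_lt_eq_zero {m : ℕ} {c : ℕ → R} (hc : ∀ i < m, c i = 0) (t : R) :
    shear t c (m + 1) = c (m + 1) + (m + 1) * t * c m := by
  rw [shear, sum_range_succ, sum_range_succ,
    sum_eq_zero fun j hj => by rw [hc j (mem_range.1 hj), mul_zero]]
  simp [add_comm]

lemma exists_shear_succ_eq_zero {m : ℕ} {c : ℕ → k} (hm : (m + 1 : k) ≠ 0)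
    (hc : ∀ i < m, c i = 0) (hcm : c m ≠ 0) : ∃ t, shear t c (m + 1) = 0 := by
  refine ⟨-c (m + 1) / ((m + 1) * c m), ?_⟩
  rw [shear_succ_of_forall_lt_eq_zero hc]
  field_simp
  ring

/-! ### Roots of binary forms -/

/-- `F` has a root `(x₀ : y₀)` of multiplicity at least `r`. -/
def HasRootOfMult (r : ℕ) (F : MvPolynomial (Fin 2) k) : Prop :=
  ∃ x0 y0 : k, ¬(x0 = 0 ∧ y0 = 0) ∧ (C y0 * X 0 - C x0 * X 1) ^ r ∣ F

lemma hasRootOfMult_iff_exists_linSubst {r : ℕ} {F : MvPolynomial (Fin 2) k} :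
    HasRootOfMult r F ↔ ∃ g : SL(2, k), X 0 ^ r ∣ linSubst g F := by
  constructor
  · rintro ⟨x0, y0, hxy, hdvd⟩
    have hcop : IsCoprime x0 y0 := by
      obtain h | h := not_and_or.1 hxy
      · exact ⟨x0⁻¹, 0, by simp [h]⟩
      · exact ⟨0, y0⁻¹, by simp [h]⟩
    obtain ⟨g, rfl, rfl⟩ := hcop.exists_SL2_col 1
    refine ⟨g, ?_⟩
    have hlin : linSubst g (C (g 1 1) * X 0 - C (g 0 1) * X 1) = X 0 := by
      have hdet := congrArg (C : k → MvPolynomial (Fin 2) k) g.det_coe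
      simp only [Matrix.det_fin_two, C_sub, C_mul, C_1] at hdet
      simp only [map_sub, map_mul, linSubst_C, linSubst_X]
      linear_combination X 0 * hdet
    simpa only [map_pow, hlin] using map_dvd (linSubst g) hdvd
  · rintro ⟨g, hdvd⟩
    refine ⟨g 0 1, g 1 1, fun h => ?_, ?_⟩
    · have hdet := g.det_coe
      rw [Matrix.det_fin_two, h.1, h.2] at hdet
      simp at hdet
    · have hlin : linSubst (g⁻¹ : SL(2, k)) (X 0) = C (g 1 1) * X 0 - C (g 0 1) * X 1 := by
        rw [linSubst_X, Matrix.SpecialLinearGroup.coe_inv, Matrix.adjugate_fin_two]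
        simp [sub_eq_add_neg]
      simpa only [map_pow, hlin, linSubst_linSubst_inv] using
        map_dvd (linSubst (g⁻¹ : SL(2, k))) hdvd

lemma hasRootOfMult_linSubst_iff {r : ℕ} {F : MvPolynomial (Fin 2) k} (g : SL(2, k)) :
    HasRootOfMult r (linSubst g F) ↔ HasRootOfMult r F := by
  simp only [hasRootOfMult_iff_exists_linSubst, linSubst_linSubst,
    ← Matrix.SpecialLinearGroup.coe_mul]
  exact ⟨fun ⟨h, hdvd⟩ => ⟨g * h, hdvd⟩,
    fun ⟨h, hdvd⟩ => ⟨g⁻¹ * h, by rwa [mul_inv_cancel_left]⟩⟩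

lemma X_zero_pow_dvd_binaryForm_iff {n r : ℕ} (hn : (n ! : k) ≠ 0) {c : ℕ → k} :
    X 0 ^ r ∣ binaryForm n c ↔ ∀ i < r, i ≤ n → c i = 0 := by
  constructor
  · rintro ⟨G, hG⟩ i hir hin
    have hcoeff : coeff (fun₀ | 0 => i | 1 => n - i) (binaryForm n c) = 0 := by
      rw [hG, X_pow_eq_monomial, coeff_monomial_mul', if_neg]
      exact fun hle => (by simpa using hle 0 : r ≤ i).not_gt hir
    rw [coeff_binaryForm, if_pos (by simp [hin])] at hcoeff
    simpa [choose_cast_ne_zero hn hin] using hcoeff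
  · intro hc
    rw [binaryForm_eq_sum]
    refine dvd_sum fun i hi => ?_
    obtain hir | hri := lt_or_ge i r
    · simp [hc i hir (by simpa [Nat.lt_succ_iff] using hi)]
    · exact Dvd.dvd.mul_right (Dvd.dvd.mul_left (pow_dvd_pow _ hri) _) _

lemma hasRootOfMult_binaryForm_of_initial {n r : ℕ} {c : ℕ → k} (hn : (n ! : k) ≠ 0)
    (hc : ∀ i < r, c i = 0) : HasRootOfMult r (binaryForm n c) :=
  hasRootOfMult_iff_exists_linSubst.2 ⟨1, by
    rw [Matrix.SpecialLinearGroup.coe_one, linSubst_one]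
    exact (X_zero_pow_dvd_binaryForm_iff hn).2 fun i hi _ => hc i hi⟩

lemma hasRootOfMult_binaryForm_of_final {n r : ℕ} {c : ℕ → k}
    (hc : ∀ i ≤ n, n < i + r → c i = 0) : HasRootOfMult r (binaryForm n c) := by
  refine ⟨-1, 0, by simp, ?_⟩
  rw [binaryForm_eq_sum]
  refine dvd_sum fun i hi => ?_
  obtain hir | hri := lt_or_ge n (i + r)
  · simp [hc i (by simpa [Nat.lt_succ_iff] using hi) hir]
  · simpa using Dvd.dvd.mul_left (pow_dvd_pow (X 1 : MvPolynomial (Fin 2) k)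
      (by lia : r ≤ n - i)) _

lemma hasRootOfMult_one_homogenize [IsAlgClosed k] {n : ℕ} (hn : n ≠ 0) {p : Polynomial k}
    (hp : p.natDegree ≤ n) : HasRootOfMult 1 (p.homogenize n) := by
  obtain ⟨n, rfl⟩ := Nat.exists_eq_add_one_of_ne_zero hn
  obtain hdeg | hdeg := Nat.le_succ_iff.1 hp
  · have hY := Polynomial.homogenize_mul p 1 hdeg (Polynomial.natDegree_one.trans_le zero_le_one)
    refine ⟨-1, 0, by simp, ?_⟩
    rw [← mul_one p, hY]
    simp
  · obtain ⟨t, ht⟩ := IsAlgClosed.exists_root p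
      (Polynomial.degree_ne_of_natDegree_ne (hdeg.trans_ne n.succ_ne_zero))
    obtain ⟨q, rfl⟩ := Polynomial.dvd_iff_isRoot.2 ht
    have hq : q.natDegree ≤ n := by
      rw [(Polynomial.monic_X_sub_C t).natDegree_mul' (by rintro rfl; simp at hdeg),
        Polynomial.natDegree_X_sub_C] at hdeg
      lia
    refine ⟨t, 1, by simp, ?_⟩
    rw [add_comm n, Polynomial.homogenize_mul _ _ (Polynomial.natDegree_X_sub_C_le t) hq]
    simp

/-! ### Invariants of binary octavics -/

lemma CharOK.factorial_eight_ne_zero (hk : CharOK k) : (8! : k) ≠ 0 := by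
  have hprime {p : ℕ} (hp : p.Prime) (hne : ringChar k ≠ p) : (p : k) ≠ 0 := fun h0 =>
    hne (((Nat.dvd_prime hp).1 (ringChar.dvd h0)).resolve_left CharP.ringChar_ne_one)
  obtain ⟨h2, h3, h5, h7⟩ := hk
  rw [show (8! : ℕ) = 2 ^ 7 * 3 ^ 2 * 5 * 7 by decide]
  simp only [Nat.cast_mul, Nat.cast_pow]
  exact mul_ne_zero (mul_ne_zero (mul_ne_zero (pow_ne_zero _ (hprime Nat.prime_two h2))
    (pow_ne_zero _ (hprime Nat.prime_three h3))) (hprime Nat.prime_five h5))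
    (hprime Nat.prime_seven h7)

/-- The covariant `κ = (F, F)⁶` of a binary octavic. -/
def octavicKappa (F : MvPolynomial (Fin 2) k) : MvPolynomial (Fin 2) k :=
  transvectant 8 8 6 F F

/-- The covariant `g = (F, F)⁴` of a binary octavic. -/
def octavicG (F : MvPolynomial (Fin 2) k) : MvPolynomial (Fin 2) k :=
  transvectant 8 8 4 F F

/-- The covariant `m = (F, κ)⁴` of a binary octavic. -/
def octavicM (F : MvPolynomial (Fin 2) k) : MvPolynomial (Fin 2) k :=
  transvectant 8 4 4 F (octavicKappa F)

/-- The covariant `p = (g, κ)⁴` of a binary octavic. -/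
def octavicP (F : MvPolynomial (Fin 2) k) : MvPolynomial (Fin 2) k :=
  transvectant 8 4 4 (octavicG F) (octavicKappa F)

/-- The Hessian covariant `(q, q)²` of a binary quartic. -/
def quarticHessian (q : MvPolynomial (Fin 2) k) : MvPolynomial (Fin 2) k :=
  transvectant 4 4 2 q q

/-- The vanishing of the invariants `J₂, …, J₈` of a binary octavic, stripped of their numerical
factors. -/
def OctavicInvariantsVanish (F : MvPolynomial (Fin 2) k) : Prop :=
  constantCoeff (transvectant 8 8 8 F F) = 0 ∧
  constantCoeff (transvectant 8 8 8 F (octavicG F)) = 0 ∧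
  constantCoeff (transvectant 4 4 4 (octavicKappa F) (octavicKappa F)) = 0 ∧
  constantCoeff (transvectant 4 4 4 (octavicM F) (octavicKappa F)) = 0 ∧
  constantCoeff (transvectant 4 4 4 (octavicKappa F) (quarticHessian (octavicKappa F))) = 0 ∧
  constantCoeff (transvectant 4 4 4 (octavicM F) (quarticHessian (octavicKappa F))) = 0 ∧
  constantCoeff (transvectant 4 4 4 (octavicP F) (quarticHessian (octavicKappa F))) = 0

lemma octavicInvariantsVanish_octForm_iff (h8 : (8! : k) ≠ 0) (a : Fin 9 → k) :
    OctavicInvariantsVanish (octForm a) ↔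
      (J2 a = 0 ∧ J3 a = 0 ∧ J4 a = 0 ∧ J5 a = 0 ∧ J6 a = 0 ∧ J7 a = 0 ∧ J8 a = 0) := by
  have h2 : (2 : k) ≠ 0 := ofNat_ne_zero_of_dvd_factorial h8 (by decide)
  have h3 : (3 : k) ≠ 0 := ofNat_ne_zero_of_dvd_factorial h8 (by decide)
  have h5 : (5 : k) ≠ 0 := ofNat_ne_zero_of_dvd_factorial h8 (by decide)
  have h7 : (7 : k) ≠ 0 := ofNat_ne_zero_of_dvd_factorial h8 (by decide)
  simp [OctavicInvariantsVanish, octavicKappa, octavicG, octavicM, octavicP, quarticHessian,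
    J2, J3, J4, J5, J6, J7, J8, covg, covk, covh, covm, covp, h2, h3, h5, h7]

lemma octavicInvariantsVanish_linSubst_iff {F : MvPolynomial (Fin 2) k} (g : SL(2, k)) :
    OctavicInvariantsVanish (linSubst g F) ↔ OctavicInvariantsVanish F := by
  simp only [OctavicInvariantsVanish, octavicKappa, octavicG, octavicM, octavicP, quarticHessian,
    transvectant_specialLinear, constantCoeff_linSubst]

/-- The coefficient sequence of the covariant `κ` of `binaryForm 8 c`. -/
def kappaCoeff (c : ℕ → k) : ℕ → k := transvectantCoeff 2 2 6 c c

/-- The coefficient sequence of the covariant `g` of `binaryForm 8 c`. -/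
def gCoeff (c : ℕ → k) : ℕ → k := transvectantCoeff 4 4 4 c c

/-- The coefficient sequence of the Hessian covariant of `binaryForm 4 c`. -/
def hessianCoeff (c : ℕ → k) : ℕ → k := transvectantCoeff 2 2 2 c c

lemma octavicKappa_binaryForm (h8 : (8! : k) ≠ 0) (c : ℕ → k) :
    octavicKappa (binaryForm 8 c) = binaryForm 4 (kappaCoeff c) :=
  transvectant_binaryForm (n := 2) (m := 2) (r := 6) h8 h8
    (factorial_cast_ne_zero_of_le h8 (by norm_num)) c c

lemma octavicG_binaryForm (h8 : (8! : k) ≠ 0) (c : ℕ → k) :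
    octavicG (binaryForm 8 c) = binaryForm 8 (gCoeff c) :=
  transvectant_binaryForm (n := 4) (m := 4) (r := 4) h8 h8 h8 c c

lemma quarticHessian_binaryForm (h4 : (4! : k) ≠ 0) (c : ℕ → k) :
    quarticHessian (binaryForm 4 c) = binaryForm 4 (hessianCoeff c) :=
  transvectant_binaryForm (n := 2) (m := 2) (r := 2) h4 h4 h4 c c

/-- The coefficient sequence of the fourth transvectant of a binary octavic and a binary quartic
with coefficient sequences `c` and `d`. -/
def quarticContraction (c d : ℕ → R) (i : ℕ) : R := apolarPairing 4 (fun j => c (i + j)) d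

lemma transvectant_eight_four_binaryForm (h8 : (8! : k) ≠ 0) (c d : ℕ → k) :
    transvectant 8 4 4 (binaryForm 8 c) (binaryForm 4 d) =
      binaryForm 4 (quarticContraction c d) := by
  have h4 : (4! : k) ≠ 0 := factorial_cast_ne_zero_of_le h8 (by norm_num)
  rw [transvectant_binaryForm (n := 4) (m := 0) (r := 4) h8 h4 h4]
  exact binaryForm_congr fun i hi => transvectantCoeff_zero h4 hi 4 c d

lemma octavicInvariantsVanish_binaryForm_iff (h8 : (8! : k) ≠ 0) {c : ℕ → k} :
    OctavicInvariantsVanish (binaryForm 8 c) ↔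
      apolarPairing 8 c c = 0 ∧
      apolarPairing 8 c (gCoeff c) = 0 ∧
      apolarPairing 4 (kappaCoeff c) (kappaCoeff c) = 0 ∧
      apolarPairing 4 (quarticContraction c (kappaCoeff c)) (kappaCoeff c) = 0 ∧
      apolarPairing 4 (kappaCoeff c) (hessianCoeff (kappaCoeff c)) = 0 ∧
      apolarPairing 4 (quarticContraction c (kappaCoeff c)) (hessianCoeff (kappaCoeff c)) = 0 ∧
      apolarPairing 4 (quarticContraction (gCoeff c) (kappaCoeff c))
        (hessianCoeff (kappaCoeff c)) = 0 := by
  have h4 : (4! : k) ≠ 0 := factorial_cast_ne_zero_of_le h8 (by norm_num)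
  simp only [OctavicInvariantsVanish, octavicM, octavicP, octavicKappa_binaryForm h8,
    octavicG_binaryForm h8, quarticHessian_binaryForm h4, transvectant_eight_four_binaryForm h8,
    constantCoeff_transvectant_binaryForm h8, constantCoeff_transvectant_binaryForm h4]

lemma isHomogeneous_octForm (a : Fin 9 → k) : (octForm a).IsHomogeneous 8 :=
  IsHomogeneous.sum _ _ _ fun i _ => by
    have h := ((isHomogeneous_C (Fin 2) (a i)).mul (isHomogeneous_X_pow 0 (i : ℕ))).mul
      (isHomogeneous_X_pow (R := k) (1 : Fin 2) (8 - (i : ℕ)))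
    rwa [zero_add, Nat.add_sub_cancel' (Nat.lt_succ_iff.1 i.is_lt)] at h

lemma apolarPairing_eq_zero_of_lt {r p q : ℕ} {c d : ℕ → R} (hc : ∀ i < p, c i = 0)
    (hd : ∀ i < q, d i = 0) (hr : r < p + q) : apolarPairing r c d = 0 := by
  refine sum_eq_zero fun j hj => ?_
  obtain hjq | hqj := lt_or_ge j q
  · rw [hd j hjq, mul_zero]
  · rw [hc (r - j) (by rw [mem_range] at hj; lia), mul_zero, zero_mul]

lemma apolarPairing_of_forall_lt_eq_zero {r : ℕ} {d : ℕ → R} (hd : ∀ i < r, d i = 0)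
    (c : ℕ → R) : apolarPairing r c d = (-1) ^ r * c 0 * d r := by
  rw [apolarPairing, sum_range_succ,
    sum_eq_zero fun j hj => by rw [hd j (mem_range.1 hj), mul_zero]]
  simp

lemma transvectantCoeff_eq_zero_of_lt {p q r i : ℕ} {c d : ℕ → k} (n m : ℕ)
    (hc : ∀ i < p, c i = 0) (hd : ∀ i < q, d i = 0) (hr : i + r < p + q) :
    transvectantCoeff n m r c d i = 0 := by
  rw [transvectantCoeff, sum_eq_zero, zero_div]
  intro a ha
  rw [HasAntidiagonal.mem_antidiagonal] at ha
  rw [apolarPairing_eq_zero_of_lt (p := p - a.1) (q := q - a.2) (fun j hj => hc _ (by lia))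
    (fun j hj => hd _ (by lia)) (by lia), mul_zero]

lemma quarticContraction_eq_zero_of_lt {p q i : ℕ} {c d : ℕ → R} (hc : ∀ i < p, c i = 0)
    (hd : ∀ i < q, d i = 0) (hr : i + 4 < p + q) : quarticContraction c d i = 0 :=
  apolarPairing_eq_zero_of_lt (p := p - i) (fun j hj => hc _ (by lia)) hd (by lia)

lemma octavicInvariantsVanish_of_initial (h8 : (8! : k) ≠ 0) {c : ℕ → k}
    (hc : ∀ i < 5, c i = 0) : OctavicInvariantsVanish (binaryForm 8 c) := by
  have hκ : ∀ i < 4, kappaCoeff c i = 0 := fun i hi =>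
    transvectantCoeff_eq_zero_of_lt 2 2 hc hc (by lia)
  have hg : ∀ i < 6, gCoeff c i = 0 := fun i hi =>
    transvectantCoeff_eq_zero_of_lt 4 4 hc hc (by lia)
  have hh : ∀ i < 6, hessianCoeff (kappaCoeff c) i = 0 := fun i hi =>
    transvectantCoeff_eq_zero_of_lt 2 2 hκ hκ (by lia)
  have hm : ∀ i < 5, quarticContraction c (kappaCoeff c) i = 0 := fun i hi =>
    quarticContraction_eq_zero_of_lt hc hκ (by lia)
  have hp : ∀ i < 6, quarticContraction (gCoeff c) (kappaCoeff c) i = 0 := fun i hi =>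
    quarticContraction_eq_zero_of_lt hg hκ (by lia)
  rw [octavicInvariantsVanish_binaryForm_iff h8]
  exact ⟨apolarPairing_eq_zero_of_lt hc hc (by norm_num),
    apolarPairing_eq_zero_of_lt hc hg (by norm_num),
    apolarPairing_eq_zero_of_lt hκ hκ (by norm_num),
    apolarPairing_eq_zero_of_lt hm hκ (by norm_num),
    apolarPairing_eq_zero_of_lt hκ hh (by norm_num),
    apolarPairing_eq_zero_of_lt hm hh (by norm_num),
    apolarPairing_eq_zero_of_lt hp hh (by norm_num)⟩

lemma exists_linSubst_eq_binaryForm_of_hasRootOfMult {n r : ℕ} {F : MvPolynomial (Fin 2) k}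
    (hn : (n ! : k) ≠ 0) (hr : r ≤ n + 1) (hF : F.IsHomogeneous n) (hroot : HasRootOfMult r F) :
    ∃ (g : SL(2, k)) (c : ℕ → k), linSubst g F = binaryForm n c ∧ ∀ i < r, c i = 0 := by
  obtain ⟨g, hdvd⟩ := hasRootOfMult_iff_exists_linSubst.1 hroot
  obtain ⟨c, hc⟩ := exists_eq_binaryForm hn (isHomogeneous_linSubst hF g)
  refine ⟨g, c, hc, fun i hi => ?_⟩
  rw [hc, X_zero_pow_dvd_binaryForm_iff hn] at hdvd
  exact hdvd i hi (by lia)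

lemma HasRootOfMult.octavicInvariantsVanish {F : MvPolynomial (Fin 2) k} (h8 : (8! : k) ≠ 0)
    (hF : F.IsHomogeneous 8) (hroot : HasRootOfMult 5 F) : OctavicInvariantsVanish F := by
  obtain ⟨g, c, hgF, hc⟩ :=
    exists_linSubst_eq_binaryForm_of_hasRootOfMult h8 (by norm_num) hF hroot
  rw [← octavicInvariantsVanish_linSubst_iff g, hgF]
  exact octavicInvariantsVanish_of_initial h8 hc

lemma apolarPairing_two (c d : ℕ → R) :
    apolarPairing 2 c d = c 2 * d 0 - 2 * c 1 * d 1 + c 0 * d 2 := by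
  simp only [apolarPairing, sum_range_succ, sum_range_zero, Nat.choose, Nat.reduceAdd,
    Nat.reduceSub, Nat.cast_ofNat, Nat.cast_one]
  ring

lemma apolarPairing_four (c d : ℕ → R) : apolarPairing 4 c d =
    c 4 * d 0 - 4 * c 3 * d 1 + 6 * c 2 * d 2 - 4 * c 1 * d 3 + c 0 * d 4 := by
  simp only [apolarPairing, sum_range_succ, sum_range_zero, Nat.choose, Nat.reduceAdd,
    Nat.reduceSub, Nat.cast_ofNat, Nat.cast_one]
  ring

lemma apolarPairing_six (c d : ℕ → R) : apolarPairing 6 c d =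
    c 6 * d 0 - 6 * c 5 * d 1 + 15 * c 4 * d 2 - 20 * c 3 * d 3 + 15 * c 2 * d 4 -
      6 * c 1 * d 5 + c 0 * d 6 := by
  simp only [apolarPairing, sum_range_succ, sum_range_zero, Nat.choose, Nat.reduceAdd,
    Nat.reduceSub, Nat.cast_ofNat, Nat.cast_one]
  ring

lemma apolarPairing_eight (c d : ℕ → R) : apolarPairing 8 c d =
    c 8 * d 0 - 8 * c 7 * d 1 + 28 * c 6 * d 2 - 56 * c 5 * d 3 + 70 * c 4 * d 4 -
      56 * c 3 * d 5 + 28 * c 2 * d 6 - 8 * c 1 * d 7 + c 0 * d 8 := by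
  simp only [apolarPairing, sum_range_succ, sum_range_zero, Nat.choose, Nat.reduceAdd,
    Nat.reduceSub, Nat.cast_ofNat, Nat.cast_one]
  ring

lemma apolarPairing_eight_self (c : ℕ → R) : apolarPairing 8 c c =
    2 * (c 0 * c 8 - 8 * c 1 * c 7 + 28 * c 2 * c 6 - 56 * c 3 * c 5 + 35 * c 4 ^ 2) := by
  rw [apolarPairing_eight]
  ring

lemma apolarPairing_hessianCoeff (h4 : (4! : k) ≠ 0) (c : ℕ → k) :
    apolarPairing 4 c (hessianCoeff c) = 6 * (c 0 * c 2 * c 4 + 2 * c 1 * c 2 * c 3 - c 2 ^ 3 -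
      c 0 * c 3 ^ 2 - c 1 ^ 2 * c 4) := by
  have h4' : (4 : k) ≠ 0 := ofNat_ne_zero_of_dvd_factorial h4 (by decide)
  have h6 : (6 : k) ≠ 0 := ofNat_ne_zero_of_dvd_factorial h4 (by decide)
  simp only [apolarPairing_four, hessianCoeff, transvectantCoeff,
    Nat.sum_antidiagonal_eq_sum_range_succ_mk, sum_range_succ, sum_range_zero, apolarPairing_two,
    Nat.choose, Nat.reduceAdd, Nat.reduceSub, zero_add, add_zero, Nat.cast_ofNat, Nat.cast_one,
    Nat.cast_zero]
  field_simp
  ring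

/-! ### Binary quartics with vanishing invariants -/

/-- The vanishing of the invariants `(q, q)⁴` and `(q, (q, q)²)⁴` of a binary quartic. -/
def QuarticInvariantsVanish (q : MvPolynomial (Fin 2) k) : Prop :=
  constantCoeff (transvectant 4 4 4 q q) = 0 ∧
  constantCoeff (transvectant 4 4 4 q (quarticHessian q)) = 0

lemma quarticInvariantsVanish_linSubst_iff {q : MvPolynomial (Fin 2) k} (g : SL(2, k)) :
    QuarticInvariantsVanish (linSubst g q) ↔ QuarticInvariantsVanish q := by
  simp only [QuarticInvariantsVanish, quarticHessian, transvectant_specialLinear,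
    constantCoeff_linSubst]

lemma quarticInvariantsVanish_binaryForm_iff (h4 : (4! : k) ≠ 0) {c : ℕ → k} :
    QuarticInvariantsVanish (binaryForm 4 c) ↔
      c 0 * c 4 - 4 * c 1 * c 3 + 3 * c 2 ^ 2 = 0 ∧
      c 0 * c 2 * c 4 + 2 * c 1 * c 2 * c 3 - c 2 ^ 3 - c 0 * c 3 ^ 2 - c 1 ^ 2 * c 4 = 0 := by
  have h2 : (2 : k) ≠ 0 := ofNat_ne_zero_of_dvd_factorial h4 (by decide)
  have h6 : (6 : k) ≠ 0 := ofNat_ne_zero_of_dvd_factorial h4 (by decide)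
  have hI : apolarPairing 4 c c = 2 * (c 0 * c 4 - 4 * c 1 * c 3 + 3 * c 2 ^ 2) := by
    rw [apolarPairing_four]; ring
  rw [QuarticInvariantsVanish, quarticHessian_binaryForm h4,
    constantCoeff_transvectant_binaryForm h4, constantCoeff_transvectant_binaryForm h4, hI,
    apolarPairing_hessianCoeff h4]
  simp only [mul_eq_zero, h2, h6, false_or]

lemma hasRootOfMult_three_of_quarticInvariantsVanish_of_zero {c : ℕ → k} (h4 : (4! : k) ≠ 0)
    (hc : QuarticInvariantsVanish (binaryForm 4 c)) (h0 : c 0 = 0) :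
    HasRootOfMult 3 (binaryForm 4 c) := by
  have h2 : (2 : k) ≠ 0 := ofNat_ne_zero_of_dvd_factorial h4 (by decide)
  have h3 : (3 : k) ≠ 0 := ofNat_ne_zero_of_dvd_factorial h4 (by decide)
  have h4' : (4 : k) ≠ 0 := ofNat_ne_zero_of_dvd_factorial h4 (by decide)
  by_cases h1 : c 1 = 0
  · obtain ⟨hI, -⟩ := (quarticInvariantsVanish_binaryForm_iff h4).1 hc
    have hc2 : c 2 = 0 := by simpa [h0, h1, h3] using hI
    exact hasRootOfMult_binaryForm_of_initial h4 fun i hi => by interval_cases i <;> assumption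
  · have hlt : ∀ i < 1, c i = 0 := by simpa using h0
    obtain ⟨t, hd2⟩ := exists_shear_succ_eq_zero (by norm_num [h2]) hlt h1
    rw [← hasRootOfMult_linSubst_iff (shearMatrix t), linSubst_shearMatrix]
    rw [← quarticInvariantsVanish_linSubst_iff (shearMatrix t), linSubst_shearMatrix,
      quarticInvariantsVanish_binaryForm_iff h4] at hc
    have hd0 : shear t c 0 = 0 := by simpa [shear] using h0
    have hd1 : shear t c 1 ≠ 0 := by rwa [shear_of_forall_lt_eq_zero hlt]
    obtain ⟨hI, hJ⟩ := hc
    have hd3 : shear t c 3 = 0 := by simpa [hd0, hd1, hd2, h4'] using hI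
    have hd4 : shear t c 4 = 0 := by simpa [hd0, hd1, hd2, hd3] using hJ
    refine hasRootOfMult_binaryForm_of_final fun i hi hi' => ?_
    have hi2 : 2 ≤ i := by lia
    interval_cases i <;> assumption

lemma QuarticInvariantsVanish.hasRootOfMult_three [IsAlgClosed k] {c : ℕ → k}
    (h4 : (4! : k) ≠ 0) (hc : QuarticInvariantsVanish (binaryForm 4 c)) :
    HasRootOfMult 3 (binaryForm 4 c) := by
  obtain ⟨g, d, hgd, hd⟩ := exists_linSubst_eq_binaryForm_of_hasRootOfMult h4 (by norm_num)
    (isHomogeneous_binaryForm 4 c)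
    (hasRootOfMult_one_homogenize four_ne_zero (natDegree_binomialPoly_le 4 c))
  rw [← quarticInvariantsVanish_linSubst_iff g, hgd] at hc
  rw [← hasRootOfMult_linSubst_iff g, hgd]
  exact hasRootOfMult_three_of_quarticInvariantsVanish_of_zero h4 hc (hd 0 one_pos)

/-! ### Reduction to normal forms -/

lemma hessianCoeff_four (c : ℕ → k) : hessianCoeff c 4 = 2 * (c 2 * c 4 - c 3 ^ 2) := by
  simp only [hessianCoeff, transvectantCoeff, Nat.sum_antidiagonal_eq_sum_range_succ_mk,
    sum_range_succ, sum_range_zero, apolarPairing_two, Nat.choose, Nat.reduceAdd, Nat.reduceSub,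
    zero_add, Nat.cast_one, Nat.cast_zero]
  ring

lemma kappaCoeff_zero (c : ℕ → k) :
    kappaCoeff c 0 = 2 * (c 0 * c 6 - 6 * c 1 * c 5 + 15 * c 2 * c 4 - 10 * c 3 ^ 2) := by
  simp only [kappaCoeff, transvectantCoeff, Nat.sum_antidiagonal_eq_sum_range_succ_mk,
    sum_range_succ, sum_range_zero, apolarPairing_six, Nat.choose, Nat.reduceSub, zero_add,
    Nat.cast_one]
  ring

lemma kappaCoeff_one (h8 : (8! : k) ≠ 0) (c : ℕ → k) :
    kappaCoeff c 1 = c 0 * c 7 - 5 * c 1 * c 6 + 9 * c 2 * c 5 - 5 * c 3 * c 4 := by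
  have h4 : (4 : k) ≠ 0 := ofNat_ne_zero_of_dvd_factorial h8 (by decide)
  simp only [kappaCoeff, transvectantCoeff, Nat.sum_antidiagonal_eq_sum_range_succ_mk,
    sum_range_succ, sum_range_zero, apolarPairing_six, Nat.choose, Nat.reduceAdd, Nat.reduceSub,
    zero_add, Nat.cast_ofNat, Nat.cast_one]
  field_simp
  ring

lemma three_mul_kappaCoeff_two (h8 : (8! : k) ≠ 0) (c : ℕ → k) : 3 * kappaCoeff c 2 =
    c 0 * c 8 - 2 * c 1 * c 7 - 8 * c 2 * c 6 + 34 * c 3 * c 5 - 25 * c 4 ^ 2 := by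
  have h6 : (6 : k) ≠ 0 := ofNat_ne_zero_of_dvd_factorial h8 (by decide)
  simp only [kappaCoeff, transvectantCoeff, Nat.sum_antidiagonal_eq_sum_range_succ_mk,
    sum_range_succ, sum_range_zero, apolarPairing_six, Nat.choose, Nat.reduceAdd, Nat.reduceSub,
    zero_add, Nat.cast_ofNat, Nat.cast_one]
  field_simp
  ring

lemma kappaCoeff_three (h8 : (8! : k) ≠ 0) (c : ℕ → k) :
    kappaCoeff c 3 = c 1 * c 8 - 5 * c 2 * c 7 + 9 * c 3 * c 6 - 5 * c 4 * c 5 := by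
  have h4 : (4 : k) ≠ 0 := ofNat_ne_zero_of_dvd_factorial h8 (by decide)
  simp only [kappaCoeff, transvectantCoeff, Nat.sum_antidiagonal_eq_sum_range_succ_mk,
    sum_range_succ, sum_range_zero, apolarPairing_six, Nat.choose, Nat.reduceAdd, Nat.reduceSub,
    zero_add, Nat.cast_ofNat, Nat.cast_one, Nat.cast_zero]
  field_simp
  ring

lemma gCoeff_one (h8 : (8! : k) ≠ 0) (c : ℕ → k) :
    gCoeff c 1 = c 0 * c 5 - 3 * c 1 * c 4 + 2 * c 2 * c 3 := by
  have h8' : (8 : k) ≠ 0 := ofNat_ne_zero_of_dvd_factorial h8 (by decide)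
  simp only [gCoeff, transvectantCoeff, Nat.sum_antidiagonal_eq_sum_range_succ_mk,
    sum_range_succ, sum_range_zero, apolarPairing_four, Nat.choose, Nat.reduceAdd, Nat.reduceSub,
    zero_add, Nat.cast_ofNat, Nat.cast_one]
  field_simp
  ring

lemma apolarPairing_gCoeff_of_sparse (h8 : (8! : k) ≠ 0) {c : ℕ → k} (hc1 : c 1 = 0)
    (hc4 : c 4 = 0) (hc5 : c 5 = 0) (hc7 : c 7 = 0) : apolarPairing 8 c (gCoeff c) =
      18 * (c 0 * c 6 ^ 2 + 8 * c 3 ^ 2 * c 6 + c 2 ^ 2 * c 8) := by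
  have h28 : (28 : k) ≠ 0 := ofNat_ne_zero_of_dvd_factorial h8 (by decide)
  have h56 : (56 : k) ≠ 0 := ofNat_ne_zero_of_dvd_factorial h8 (by decide)
  have h70 : (70 : k) ≠ 0 := ofNat_ne_zero_of_dvd_factorial h8 (by decide)
  simp only [apolarPairing_eight, gCoeff, transvectantCoeff,
    Nat.sum_antidiagonal_eq_sum_range_succ_mk,
    sum_range_succ, sum_range_zero, apolarPairing_four, Nat.choose, Nat.reduceAdd, Nat.reduceSub,
    zero_add, Nat.cast_ofNat, Nat.cast_one, hc1, hc4, hc5, hc7]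
  field_simp
  ring

lemma coeff_relations_of_kappaCoeff_eq_zero (h8 : (8! : k) ≠ 0) {c : ℕ → k}
    (hκ : ∀ i < 4, kappaCoeff c i = 0) :
    c 0 * c 6 - 6 * c 1 * c 5 + 15 * c 2 * c 4 - 10 * c 3 ^ 2 = 0 ∧
    c 0 * c 7 - 5 * c 1 * c 6 + 9 * c 2 * c 5 - 5 * c 3 * c 4 = 0 ∧
    c 0 * c 8 - 2 * c 1 * c 7 - 8 * c 2 * c 6 + 34 * c 3 * c 5 - 25 * c 4 ^ 2 = 0 ∧
    c 1 * c 8 - 5 * c 2 * c 7 + 9 * c 3 * c 6 - 5 * c 4 * c 5 = 0 := by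
  have h2 : (2 : k) ≠ 0 := ofNat_ne_zero_of_dvd_factorial h8 (by decide)
  refine ⟨?_, ?_, ?_, ?_⟩
  · simpa [kappaCoeff_zero, h2] using hκ 0 (by norm_num)
  · rw [← kappaCoeff_one h8, hκ 1 (by norm_num)]
  · rw [← three_mul_kappaCoeff_two h8, hκ 2 (by norm_num), mul_zero]
  · rw [← kappaCoeff_three h8, hκ 3 (by norm_num)]

lemma binaryForm_kappaCoeff_of_linSubst_eq (h8 : (8! : k) ≠ 0) {g : SL(2, k)} {c d : ℕ → k}
    (h : linSubst g (binaryForm 8 c) = binaryForm 8 d) :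
    linSubst g (binaryForm 4 (kappaCoeff c)) = binaryForm 4 (kappaCoeff d) := by
  rw [← octavicKappa_binaryForm h8, ← octavicKappa_binaryForm h8, octavicKappa, octavicKappa,
    ← transvectant_specialLinear, h]

lemma kappaCoeff_shear (h8 : (8! : k) ≠ 0) (t : k) (c : ℕ → k) {i : ℕ} (hi : i ≤ 4) :
    kappaCoeff (shear t c) i = shear t (kappaCoeff c) i := by
  refine eq_of_binaryForm_eq (factorial_cast_ne_zero_of_le h8 (by norm_num)) ?_ hi
  rw [← linSubst_shearMatrix t 4]
  exact (binaryForm_kappaCoeff_of_linSubst_eq h8 (linSubst_shearMatrix t 8 c)).symm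

lemma kappaCoeff_shear_of_forall_lt_eq_zero (h8 : (8! : k) ≠ 0) {c : ℕ → k} {i : ℕ}
    (hi : i ≤ 4) (hκ : ∀ j < i, kappaCoeff c j = 0) (t : k) :
    kappaCoeff (shear t c) i = kappaCoeff c i := by
  rw [kappaCoeff_shear h8 t c hi, shear_of_forall_lt_eq_zero hκ]

lemma forall_kappaCoeff_shear_eq_zero (h8 : (8! : k) ≠ 0) {c : ℕ → k} {n : ℕ} (hn : n ≤ 5)
    (hκ : ∀ i < n, kappaCoeff c i = 0) (t : k) : ∀ i < n, kappaCoeff (shear t c) i = 0 :=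
  fun i hi => by
    rw [kappaCoeff_shear_of_forall_lt_eq_zero h8 (by lia) (fun j hj => hκ j (by lia)), hκ i hi]

lemma OctavicInvariantsVanish.shear {c : ℕ → k} (hc : OctavicInvariantsVanish (binaryForm 8 c))
    (t : k) : OctavicInvariantsVanish (binaryForm 8 (shear t c)) := by
  rwa [← linSubst_shearMatrix, octavicInvariantsVanish_linSubst_iff]

lemma OctavicInvariantsVanish.exists_linSubst_kappaCoeff_eq_zero [IsAlgClosed k]
    (h8 : (8! : k) ≠ 0) {c : ℕ → k} (hc : OctavicInvariantsVanish (binaryForm 8 c)) :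
    ∃ (g : SL(2, k)) (d : ℕ → k), linSubst g (binaryForm 8 c) = binaryForm 8 d ∧
      ∀ i < 3, kappaCoeff d i = 0 := by
  have h4 : (4! : k) ≠ 0 := factorial_cast_ne_zero_of_le h8 (by norm_num)
  have hκ : QuarticInvariantsVanish (binaryForm 4 (kappaCoeff c)) := by
    obtain ⟨-, -, hj4, -, hj6, -, -⟩ := hc
    rw [← octavicKappa_binaryForm h8]
    exact ⟨hj4, hj6⟩
  obtain ⟨g, hg⟩ := hasRootOfMult_iff_exists_linSubst.1 (hκ.hasRootOfMult_three h4)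
  obtain ⟨d, hcd⟩ :=
    exists_eq_binaryForm h8 (isHomogeneous_linSubst (isHomogeneous_binaryForm 8 c) g)
  rw [binaryForm_kappaCoeff_of_linSubst_eq h8 hcd, X_zero_pow_dvd_binaryForm_iff h4] at hg
  exact ⟨g, d, hcd, fun i hi => hg i hi (by lia)⟩

/-- With `κ` proportional to `X ^ 3 Y`, the Hessian of `κ` is proportional to `X ^ 4`, so `J₇`,
`J₅` and `J₈` isolate single coefficients of the contractions of `f` and `g` with `κ`. -/
lemma coeff_eq_zero_of_kappaCoeff_three_ne_zero (h8 : (8! : k) ≠ 0) {c : ℕ → k}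
    (hc : OctavicInvariantsVanish (binaryForm 8 c)) (hκ : ∀ i < 3, kappaCoeff c i = 0)
    (hκ3 : kappaCoeff c 3 ≠ 0) (hκ4 : kappaCoeff c 4 = 0) :
    c 1 = 0 ∧ c 2 = 0 ∧ gCoeff c 1 = 0 := by
  have h2 : (2 : k) ≠ 0 := ofNat_ne_zero_of_dvd_factorial h8 (by decide)
  have h4 : (4 : k) ≠ 0 := ofNat_ne_zero_of_dvd_factorial h8 (by decide)
  obtain ⟨-, -, -, hj5, -, hj7, hj8⟩ := (octavicInvariantsVanish_binaryForm_iff h8).1 hc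
  have hhess : ∀ i < 4, hessianCoeff (kappaCoeff c) i = 0 := fun i hi =>
    transvectantCoeff_eq_zero_of_lt 2 2 hκ hκ (by lia)
  have hhess4 : hessianCoeff (kappaCoeff c) 4 ≠ 0 := by
    rw [hessianCoeff_four, hκ 2 (by norm_num)]
    simp [h2, hκ3]
  have hcontract (d : ℕ → k) (i : ℕ) :
      quarticContraction d (kappaCoeff c) i = -4 * d (i + 1) * kappaCoeff c 3 := by
    rw [quarticContraction, apolarPairing_four, hκ 0 (by norm_num), hκ 1 (by norm_num),
      hκ 2 (by norm_num), hκ4]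
    ring
  rw [apolarPairing_of_forall_lt_eq_zero hhess, hcontract] at hj7 hj8
  rw [apolarPairing_four, hκ 0 (by norm_num), hκ 1 (by norm_num), hκ 2 (by norm_num), hκ4,
    hcontract c 1] at hj5
  exact ⟨by simpa [h4, hκ3, hhess4] using hj7, by simpa [h4, hκ3] using hj5,
    by simpa [h4, hκ3, hhess4] using hj8⟩

lemma kappaCoeff_three_eq_zero_of_coeff_eq_zero (h8 : (8! : k) ≠ 0) {c : ℕ → k}
    (hc : OctavicInvariantsVanish (binaryForm 8 c)) (hκ : ∀ i < 3, kappaCoeff c i = 0)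
    (hc1 : c 1 = 0) (hc2 : c 2 = 0) (hg1 : gCoeff c 1 = 0) : kappaCoeff c 3 = 0 := by
  have h2 : (2 : k) ≠ 0 := ofNat_ne_zero_of_dvd_factorial h8 (by decide)
  have h5 : (5 : k) ≠ 0 := ofNat_ne_zero_of_dvd_factorial h8 (by decide)
  have h10 : (10 : k) ≠ 0 := ofNat_ne_zero_of_dvd_factorial h8 (by decide)
  have h18 : (18 : k) ≠ 0 := ofNat_ne_zero_of_dvd_factorial h8 (by decide)
  have h60 : (60 : k) ≠ 0 := ofNat_ne_zero_of_dvd_factorial h8 (by decide)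
  obtain ⟨hj2, hj3, -⟩ := (octavicInvariantsVanish_binaryForm_iff h8).1 hc
  have hκ0 : c 0 * c 6 = 10 * c 3 ^ 2 := by
    have h := hκ 0 (by norm_num)
    rw [kappaCoeff_zero, hc1, hc2] at h
    simpa [h2, sub_eq_zero] using h
  have hκ1 := hκ 1 (by norm_num)
  have hκ2 := three_mul_kappaCoeff_two h8 c
  rw [kappaCoeff_one h8] at hκ1
  rw [hκ 2 (by norm_num), mul_zero] at hκ2
  rw [gCoeff_one h8, hc1, hc2] at hg1
  rw [kappaCoeff_three h8, hc1, hc2]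
  by_cases hc0 : c 0 = 0
  · have hc3 : c 3 = 0 := by simpa [hc0, h10] using hκ0
    have h25 : (25 : k) ≠ 0 := by simpa [show (25 : k) = 5 ^ 2 by norm_num] using h5
    have hc4 : c 4 = 0 := by simpa [hc0, hc1, hc2, hc3, h25] using hκ2
    simp [hc3, hc4]
  · have hc5 : c 5 = 0 := by simpa [hc0] using hg1
    have hc4 : c 4 = 0 := by
      have h : 2 * 60 * c 4 ^ 2 = 0 := by
        rw [apolarPairing_eight_self, hc1, hc2, hc5] at hj2
        rw [hc1, hc2, hc5] at hκ2
        linear_combination hj2 + 2 * hκ2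
      simpa [h2, h60] using h
    have hc7 : c 7 = 0 := by simpa [hc0, hc1, hc2, hc4] using hκ1
    have h36 : c 3 ^ 2 * c 6 = 0 := by
      have h : 18 ^ 2 * (c 3 ^ 2 * c 6) = 0 := by
        rw [apolarPairing_gCoeff_of_sparse h8 hc1 hc4 hc5 hc7, hc2] at hj3
        linear_combination hj3 - 18 * c 6 * hκ0
      simpa [h18] using h
    obtain hc3 | hc6 : c 3 = 0 ∨ c 6 = 0 := by simpa using h36
    · simp [hc3, hc4]
    · simp [hc4, hc6]

lemma kappaCoeff_three_eq_zero_of_kappaCoeff_four_eq_zero (h8 : (8! : k) ≠ 0) {c : ℕ → k}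
    (hc : OctavicInvariantsVanish (binaryForm 8 c)) (hκ : ∀ i < 3, kappaCoeff c i = 0)
    (hκ4 : kappaCoeff c 4 = 0) : kappaCoeff c 3 = 0 := by
  by_contra hκ3
  obtain ⟨hc1, hc2, hg1⟩ := coeff_eq_zero_of_kappaCoeff_three_ne_zero h8 hc hκ hκ3 hκ4
  exact hκ3 (kappaCoeff_three_eq_zero_of_coeff_eq_zero h8 hc hκ hc1 hc2 hg1)

lemma kappaCoeff_three_eq_zero (h8 : (8! : k) ≠ 0) {c : ℕ → k}
    (hc : OctavicInvariantsVanish (binaryForm 8 c)) (hκ : ∀ i < 3, kappaCoeff c i = 0) :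
    kappaCoeff c 3 = 0 := by
  by_contra hκ3
  have h4 : (4 : k) ≠ 0 := ofNat_ne_zero_of_dvd_factorial h8 (by decide)
  obtain ⟨t, ht⟩ := exists_shear_succ_eq_zero (m := 3) (by norm_num [h4]) hκ hκ3
  have hκt4 : kappaCoeff (shear t c) 4 = 0 := by rw [kappaCoeff_shear h8 t c le_rfl, ht]
  refine hκ3 ?_
  rw [← kappaCoeff_shear_of_forall_lt_eq_zero h8 (by norm_num) hκ t]
  exact kappaCoeff_three_eq_zero_of_kappaCoeff_four_eq_zero h8 (hc.shear t)
    (forall_kappaCoeff_shear_eq_zero h8 (by norm_num) hκ t) hκt4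

lemma OctavicInvariantsVanish.exists_linSubst_coeff_zero_eq_zero [IsAlgClosed k]
    (h8 : (8! : k) ≠ 0) {c : ℕ → k} (hc : OctavicInvariantsVanish (binaryForm 8 c))
    (hκ : ∀ i < 4, kappaCoeff c i = 0) :
    ∃ (g : SL(2, k)) (d : ℕ → k), linSubst g (binaryForm 8 c) = binaryForm 8 d ∧
      d 0 = 0 ∧ ∀ i < 4, kappaCoeff d i = 0 := by
  by_cases hκ4 : kappaCoeff c 4 = 0
  · have hκ0 : binaryForm 4 (kappaCoeff c) = 0 := binaryForm_eq_zero fun i hi => by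
      obtain rfl | hi := hi.eq_or_lt
      exacts [hκ4, hκ i hi]
    obtain ⟨g, d, hcd, hd⟩ := exists_linSubst_eq_binaryForm_of_hasRootOfMult h8 (by norm_num)
      (isHomogeneous_binaryForm 8 c)
      (hasRootOfMult_one_homogenize (by norm_num) (natDegree_binomialPoly_le 8 c))
    have hκd := binaryForm_kappaCoeff_of_linSubst_eq h8 hcd
    rw [hκ0, map_zero, ← binaryForm_eq_zero (n := 4) (c := 0) fun _ _ => rfl] at hκd
    refine ⟨g, d, hcd, hd 0 one_pos, fun i hi => ?_⟩
    exact (eq_of_binaryForm_eq (factorial_cast_ne_zero_of_le h8 (by norm_num)) hκd hi.le).symm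
  · obtain ⟨-, -, -, hj5, -⟩ := (octavicInvariantsVanish_binaryForm_iff h8).1 hc
    rw [apolarPairing_of_forall_lt_eq_zero hκ, quarticContraction,
      apolarPairing_of_forall_lt_eq_zero hκ] at hj5
    refine ⟨1, c, ?_, by simpa [hκ4] using hj5, hκ⟩
    rw [Matrix.SpecialLinearGroup.coe_one, linSubst_one]

lemma hasRootOfMult_five_of_forall_lt_three_eq_zero (h8 : (8! : k) ≠ 0) {c : ℕ → k}
    (hκ : ∀ i < 4, kappaCoeff c i = 0) (hc : ∀ i < 3, c i = 0) :
    HasRootOfMult 5 (binaryForm 8 c) := by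
  have h5 : (5 : k) ≠ 0 := ofNat_ne_zero_of_dvd_factorial h8 (by decide)
  have h10 : (10 : k) ≠ 0 := ofNat_ne_zero_of_dvd_factorial h8 (by decide)
  have h25 : (25 : k) ≠ 0 := by simpa [show (25 : k) = 5 ^ 2 by norm_num] using h5
  obtain ⟨hκ0, -, hκ2, -⟩ := coeff_relations_of_kappaCoeff_eq_zero h8 hκ
  have hc0 := hc 0 (by norm_num)
  have hc1 := hc 1 (by norm_num)
  have hc2 := hc 2 (by norm_num)
  have hc3 : c 3 = 0 := by simpa [hc0, hc1, hc2, h10] using hκ0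
  have hc4 : c 4 = 0 := by simpa [hc0, hc1, hc2, hc3, h25] using hκ2
  exact hasRootOfMult_binaryForm_of_initial h8 fun i hi => by interval_cases i <;> assumption

lemma hasRootOfMult_five_of_coeff_three_eq_zero (h8 : (8! : k) ≠ 0) {c : ℕ → k}
    (hJ3 : apolarPairing 8 c (gCoeff c) = 0) (hκ : ∀ i < 4, kappaCoeff c i = 0)
    (hc0 : c 0 = 0) (hc1 : c 1 = 0) (hc2 : c 2 ≠ 0) (hc3 : c 3 = 0) :
    HasRootOfMult 5 (binaryForm 8 c) := by
  have h3 : (3 : k) ≠ 0 := ofNat_ne_zero_of_dvd_factorial h8 (by decide)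
  have h5 : (5 : k) ≠ 0 := ofNat_ne_zero_of_dvd_factorial h8 (by decide)
  have h8' : (8 : k) ≠ 0 := ofNat_ne_zero_of_dvd_factorial h8 (by decide)
  have h9 : (9 : k) ≠ 0 := by simpa [show (9 : k) = 3 ^ 2 by norm_num] using h3
  have h15 : (15 : k) ≠ 0 := ofNat_ne_zero_of_dvd_factorial h8 (by decide)
  have h18 : (18 : k) ≠ 0 := ofNat_ne_zero_of_dvd_factorial h8 (by decide)
  obtain ⟨hκ0, hκ1, hκ2, hκ3⟩ := coeff_relations_of_kappaCoeff_eq_zero h8 hκ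
  have hc4 : c 4 = 0 := by simpa [hc0, hc1, hc2, hc3, h15] using hκ0
  have hc5 : c 5 = 0 := by simpa [hc0, hc1, hc2, hc3, h9] using hκ1
  have hc6 : c 6 = 0 := by simpa [hc0, hc1, hc2, hc3, hc4, h8'] using hκ2
  have hc7 : c 7 = 0 := by simpa [hc1, hc2, hc3, hc4, h5] using hκ3
  rw [apolarPairing_gCoeff_of_sparse h8 hc1 hc4 hc5 hc7] at hJ3
  have hc8 : c 8 = 0 := by simpa [hc2, hc3, hc6, h18] using hJ3
  refine hasRootOfMult_binaryForm_of_final fun i hi hi' => ?_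
  have hi4 : 4 ≤ i := by lia
  interval_cases i <;> assumption

lemma hasRootOfMult_five_of_coeff_four_eq_zero (h8 : (8! : k) ≠ 0) {c : ℕ → k}
    (hκ : ∀ i < 4, kappaCoeff c i = 0) (hc0 : c 0 = 0) (hc1 : c 1 ≠ 0) (hc3 : c 3 = 0)
    (hc4 : c 4 = 0) : HasRootOfMult 5 (binaryForm 8 c) := by
  have h2 : (2 : k) ≠ 0 := ofNat_ne_zero_of_dvd_factorial h8 (by decide)
  have h5 : (5 : k) ≠ 0 := ofNat_ne_zero_of_dvd_factorial h8 (by decide)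
  have h6 : (6 : k) ≠ 0 := ofNat_ne_zero_of_dvd_factorial h8 (by decide)
  obtain ⟨hκ0, hκ1, hκ2, hκ3⟩ := coeff_relations_of_kappaCoeff_eq_zero h8 hκ
  have hc5 : c 5 = 0 := by simpa [hc0, hc1, hc3, hc4, h6] using hκ0
  have hc6 : c 6 = 0 := by simpa [hc0, hc1, hc3, hc4, hc5, h5] using hκ1
  have hc7 : c 7 = 0 := by simpa [hc0, hc1, hc3, hc4, hc6, h2] using hκ2
  have hc8 : c 8 = 0 := by simpa [hc1, hc3, hc4, hc7] using hκ3
  refine hasRootOfMult_binaryForm_of_final fun i hi hi' => ?_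
  have hi4 : 4 ≤ i := by lia
  interval_cases i <;> assumption

lemma exists_cuspidal_parameter {a b c : k} (h2 : (2 : k) ≠ 0) (h3 : (3 : k) ≠ 0) (ha : a ≠ 0)
    (habc : 64 * b ^ 3 + 27 * (a * c ^ 2) = 0) : ∃ t, b = -3 * t ^ 2 * a ∧ c = 8 * t ^ 3 * a := by
  by_cases hb : b = 0
  · have h27 : (27 : k) ≠ 0 := by simpa [show (27 : k) = 3 ^ 3 by norm_num] using h3
    exact ⟨0, by simpa using hb, by simpa [hb, ha, h27] using habc⟩
  · have h8 : (8 : k) ≠ 0 := by simpa [show (8 : k) = 2 ^ 3 by norm_num] using h2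
    refine ⟨-3 * c / (8 * b), ?_, ?_⟩
    · field_simp
      linear_combination habc
    · field_simp
      linear_combination c * habc

lemma OctavicInvariantsVanish.cuspidal_relation (h8 : (8! : k) ≠ 0) {c : ℕ → k}
    (hc : OctavicInvariantsVanish (binaryForm 8 c)) (hκ : ∀ i < 4, kappaCoeff c i = 0)
    (hc0 : c 0 = 0) (hc2 : c 2 = 0) : 64 * c 3 ^ 3 + 27 * (c 1 * c 4 ^ 2) = 0 := by
  have h2 : (2 : k) ≠ 0 := ofNat_ne_zero_of_dvd_factorial h8 (by decide)
  have h3 : (3 : k) ≠ 0 := ofNat_ne_zero_of_dvd_factorial h8 (by decide)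
  have h5 : (5 : k) ≠ 0 := ofNat_ne_zero_of_dvd_factorial h8 (by decide)
  obtain ⟨hJ2, -⟩ := (octavicInvariantsVanish_binaryForm_iff h8).1 hc
  obtain ⟨hκ0, -, hκ2, -⟩ := coeff_relations_of_kappaCoeff_eq_zero h8 hκ
  rw [hc0, hc2] at hκ0
  rw [hc0, hc2] at hκ2
  rw [apolarPairing_eight_self, hc0, hc2] at hJ2
  have h35 : 6 * (64 * (c 3 * c 5) - 45 * c 4 ^ 2) = 0 := by linear_combination -hJ2 + 8 * hκ2
  have h : 2 ^ 3 * 3 * 5 * (64 * c 3 ^ 3 + 27 * (c 1 * c 4 ^ 2)) = 0 := by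
    linear_combination -768 * c 3 * hκ0 - 12 * c 1 * h35
  simpa [h2, h3, h5] using h

/-- The relation between `c 1`, `c 3` and `c 4` is the equation of a cuspidal cubic, whose rational
parametrization provides a single shear that kills `c 3` and `c 4` simultaneously. -/
lemma hasRootOfMult_five_of_coeff_one_ne_zero (h8 : (8! : k) ≠ 0) {c : ℕ → k}
    (hc : OctavicInvariantsVanish (binaryForm 8 c)) (hκ : ∀ i < 4, kappaCoeff c i = 0)
    (hc0 : c 0 = 0) (hc1 : c 1 ≠ 0) (hc2 : c 2 = 0) : HasRootOfMult 5 (binaryForm 8 c) := by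
  have h2 : (2 : k) ≠ 0 := ofNat_ne_zero_of_dvd_factorial h8 (by decide)
  have h3 : (3 : k) ≠ 0 := ofNat_ne_zero_of_dvd_factorial h8 (by decide)
  obtain ⟨t, hc3, hc4⟩ := exists_cuspidal_parameter h2 h3 hc1 (hc.cuspidal_relation h8 hκ hc0 hc2)
  rw [← hasRootOfMult_linSubst_iff (shearMatrix t), linSubst_shearMatrix]
  refine hasRootOfMult_five_of_coeff_four_eq_zero h8
    (forall_kappaCoeff_shear_eq_zero h8 (by norm_num) hκ t) ?_ ?_ ?_ ?_
  · simpa [shear] using hc0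
  · rwa [shear_of_forall_lt_eq_zero (by simpa using hc0)]
  · simp only [shear, sum_range_succ, sum_range_zero, Nat.choose, Nat.reduceAdd, Nat.reduceSub,
      Nat.cast_ofNat, Nat.cast_one, hc0, hc2, hc3]
    ring
  · simp only [shear, sum_range_succ, sum_range_zero, Nat.choose, Nat.reduceAdd, Nat.reduceSub,
      Nat.cast_ofNat, Nat.cast_one, hc0, hc2, hc3, hc4]
    ring

lemma hasRootOfMult_five_of_coeff_zero_eq_zero (h8 : (8! : k) ≠ 0) {c : ℕ → k}
    (hc : OctavicInvariantsVanish (binaryForm 8 c)) (hκ : ∀ i < 4, kappaCoeff c i = 0)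
    (hc0 : c 0 = 0) : HasRootOfMult 5 (binaryForm 8 c) := by
  have h2 : (2 : k) ≠ 0 := ofNat_ne_zero_of_dvd_factorial h8 (by decide)
  have h3 : (3 : k) ≠ 0 := ofNat_ne_zero_of_dvd_factorial h8 (by decide)
  have hκt := forall_kappaCoeff_shear_eq_zero h8 (by norm_num) hκ
  have hlt1 : ∀ i < 1, c i = 0 := by simpa using hc0
  by_cases hc1 : c 1 = 0
  · have hlt2 : ∀ i < 2, c i = 0 := fun i hi => by interval_cases i <;> assumption
    by_cases hc2 : c 2 = 0
    · exact hasRootOfMult_five_of_forall_lt_three_eq_zero h8 hκ fun i hi => by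
        interval_cases i <;> assumption
    · obtain ⟨t, ht⟩ := exists_shear_succ_eq_zero (by norm_num [h3]) hlt2 hc2
      obtain ⟨-, hJ3, -⟩ := (octavicInvariantsVanish_binaryForm_iff h8).1 (hc.shear t)
      rw [← hasRootOfMult_linSubst_iff (shearMatrix t), linSubst_shearMatrix]
      refine hasRootOfMult_five_of_coeff_three_eq_zero h8 hJ3 (hκt t) ?_ ?_ ?_ ht
      · simpa [shear] using hc0
      · rwa [shear_of_forall_lt_eq_zero hlt1]
      · rwa [shear_of_forall_lt_eq_zero hlt2]
  · obtain ⟨t, ht⟩ := exists_shear_succ_eq_zero (by norm_num [h2]) hlt1 hc1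
    rw [← hasRootOfMult_linSubst_iff (shearMatrix t), linSubst_shearMatrix]
    refine hasRootOfMult_five_of_coeff_one_ne_zero h8 (hc.shear t) (hκt t) ?_ ?_ ht
    · simpa [shear] using hc0
    · rwa [shear_of_forall_lt_eq_zero hlt1]

lemma OctavicInvariantsVanish.hasRootOfMult_five [IsAlgClosed k] (h8 : (8! : k) ≠ 0)
    {F : MvPolynomial (Fin 2) k} (hF : F.IsHomogeneous 8) (hinv : OctavicInvariantsVanish F) :
    HasRootOfMult 5 F := by
  obtain ⟨b, rfl⟩ := exists_eq_binaryForm h8 hF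
  obtain ⟨g, c, hgc, hκ3⟩ := hinv.exists_linSubst_kappaCoeff_eq_zero h8
  rw [← octavicInvariantsVanish_linSubst_iff g, hgc] at hinv
  rw [← hasRootOfMult_linSubst_iff g, hgc]
  obtain ⟨g', d, hgd, hd0, hκ⟩ := hinv.exists_linSubst_coeff_zero_eq_zero h8 fun i hi => by
    obtain rfl | hi := Nat.lt_succ_iff_lt_or_eq.1 hi |>.symm
    exacts [kappaCoeff_three_eq_zero h8 hinv hκ3, hκ3 i hi]
  rw [← octavicInvariantsVanish_linSubst_iff g', hgd] at hinv
  rw [← hasRootOfMult_linSubst_iff g', hgd]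
  exact hasRootOfMult_five_of_coeff_zero_eq_zero h8 hinv hκ hd0

/-- A nonzero binary octavic over an algebraically closed field of characteristic
∉ {2,3,5,7} has a root of multiplicity at least 5 if and only if `J_i = 0` for
`i = 2, ..., 8`. -/
theorem hasRootOfMultFive_iff_J_eq_zero (k : Type*) [Field k] [IsAlgClosed k] (hk : CharOK k)
    (a : Fin 9 → k) (ha : octForm a ≠ 0) :
    (∃ x0 y0 : k, ¬(x0 = 0 ∧ y0 = 0) ∧ (C y0 * X 0 - C x0 * X 1) ^ 5 ∣ octForm a) ↔
      (J2 a = 0 ∧ J3 a = 0 ∧ J4 a = 0 ∧ J5 a = 0 ∧ J6 a = 0 ∧ J7 a = 0 ∧ J8 a = 0) := by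
  have h8 : (8! : k) ≠ 0 := hk.factorial_eight_ne_zero
  rw [← octavicInvariantsVanish_octForm_iff h8]
  exact ⟨HasRootOfMult.octavicInvariantsVanish h8 (isHomogeneous_octForm a),
    OctavicInvariantsVanish.hasRootOfMult_five h8 (isHomogeneous_octForm a)⟩
end
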